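/- arXiv:2404.08289 — 4 statements merged into one kernel-verified Lean document; each statement's English description precedes it below -/
import Mathlib

section
/- Let d, n ≥ 1. A map V : (Fin n → ℝ^d) → (Fin n → ℝ^d) is permutation-equivariant if and only if there exists a function f : ℝ^d → Multiset(ℝ^d) → ℝ^d such that for every x ∈ (Fin n → ℝ^d) and every i ∈ Fin n, V(x)(i) = f(x(i), {{x(1), …, x(n)}}), where {{x(1), …, x(n)}} denotes the multiset of values of x. (Permutation-equivariant vector fields on (ℝ^d)^n are exactly those of the form x_i ↦ f(x_i, μ) with μ the empirical measure of the configuration.) -/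
/-!
The transposition of two indices at which `x` takes the same value fixes `x`, so an equivariant `V`
has equal entries there: `V x i` depends only on `x` and the value `x i`. Configurations with the
same multiset of values differ by a permutation, along which equivariance transports `V`. Hence
`(x, i) ↦ V x i` is constant on the fibers of `(x, i) ↦ (x i, {{x j | j}})` and factors through it.
-/

section MultisetOfValues

variable {ι κ α : Type*} [Fintype ι] [Fintype κ]

theorem map_univ_val_comp_equiv (e : ι ≃ κ) (y : κ → α) :
    Finset.univ.val.map (y ∘ e) = Finset.univ.val.map y := by
  rw [← Multiset.map_map, Multiset.map_univ_val_equiv]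

theorem count_map_univ_val_eq_card_fiber [DecidableEq α] (x : ι → α) (a : α) :
    (Finset.univ.val.map x).count a = Nat.card {i // x i = a} := by
  rw [Multiset.count_map, Nat.card_eq_fintype_card, Fintype.card_subtype, ← Finset.filter_val,
    Finset.card_val]
  simp only [eq_comm]

theorem map_univ_val_eq_iff_exists_eq_comp_equiv {x : ι → α} {y : κ → α} :
    Finset.univ.val.map x = Finset.univ.val.map y ↔ ∃ e : ι ≃ κ, x = y ∘ e := by
  classical
  constructor
  · intro h
    have card_fiber_eq (a : α) : Nat.card {i // x i = a} = Nat.card {k // y k = a} := by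
      rw [← count_map_univ_val_eq_card_fiber, h, count_map_univ_val_eq_card_fiber]
    have fiber_equiv (a : α) : Nonempty ({i // x i = a} ≃ {k // y k = a}) :=
      Finite.card_eq.mp (card_fiber_eq a)
    let e (a : α) : {i // x i = a} ≃ {k // y k = a} := (fiber_equiv a).some
    exact ⟨Equiv.ofFiberEquiv e, funext fun i => (Equiv.ofFiberEquiv_map e i).symm⟩
  · rintro ⟨e, rfl⟩
    exact map_univ_val_comp_equiv e y

end MultisetOfValues

section PermEquivariant

variable {ι α β : Type*} {V : (ι → α) → ι → β}

/-- Permutation-equivariance of a map between spaces of `ι`-indexed families, where permutations of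
`ι` act by precomposition. The source and target families may take values in different types. -/
def IsPermEquivariant (V : (ι → α) → ι → β) : Prop :=
  ∀ (σ : Equiv.Perm ι) (x : ι → α), V (x ∘ σ) = V x ∘ σ

theorem IsPermEquivariant.apply_eq_apply (hV : IsPermEquivariant V) {x : ι → α} {i j : ι}
    (h : x i = x j) : V x i = V x j := by
  classical
  have comp_swap_eq : x ∘ Equiv.swap i j = x := by
    rw [Equiv.comp_swap_eq_update, h, Function.update_eq_self, ← h, Function.update_eq_self]
  calc
    V x i = V (x ∘ Equiv.swap i j) i := by rw [comp_swap_eq]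
    _ = V x (Equiv.swap i j i) := congrFun (hV _ x) i
    _ = V x j := by rw [Equiv.swap_apply_left]

theorem isPermEquivariant_iff_factorsThrough [Fintype ι] :
    IsPermEquivariant V ↔
      (Function.uncurry V).FactorsThrough fun p => (p.1 p.2, Finset.univ.val.map p.1) := by
  constructor
  · rintro hV ⟨x, i⟩ ⟨y, j⟩ h
    obtain ⟨value_eq, multiset_eq⟩ := Prod.mk.inj h
    obtain ⟨σ, rfl⟩ := map_univ_val_eq_iff_exists_eq_comp_equiv.mp multiset_eq
    calc
      V (y ∘ σ) i = V y (σ i) := congrFun (hV σ y) i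
      _ = V y j := hV.apply_eq_apply value_eq
  · intro hV σ x
    funext i
    exact @hV (x ∘ σ, i) (x, σ i) (Prod.ext rfl (map_univ_val_comp_equiv σ x))

theorem permutation_equivariant_iff_function_of_empirical_measure_general [Fintype ι] [Nonempty β]
    (V : (ι → α) → ι → β) :
    IsPermEquivariant V ↔
      ∃ f : α → Multiset α → β, ∀ x i, V x i = f (x i) (Finset.univ.val.map x) := by
  rw [isPermEquivariant_iff_factorsThrough, Function.factorsThrough_iff,
    (Equiv.curry α (Multiset α) β).exists_congr_left]
  simp only [funext_iff, Prod.forall, Function.uncurry_apply_pair, Function.comp_apply,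
    Equiv.curry_symm_apply]

end PermEquivariant

/-- Permutation-equivariant vector fields on `(ℝ^d)^n` are exactly those of the
form `xᵢ ↦ f (xᵢ, μ)` where `μ` is the empirical measure (multiset of values)
of the configuration. -/
theorem permutation_equivariant_iff_function_of_empirical_measure
    (d n : ℕ) (hd : 1 ≤ d) (hn : 1 ≤ n)
    (V : (Fin n → EuclideanSpace ℝ (Fin d)) → (Fin n → EuclideanSpace ℝ (Fin d))) :
    (∀ (σ : Equiv.Perm (Fin n)) (x : Fin n → EuclideanSpace ℝ (Fin d)),
        V (x ∘ σ) = (V x) ∘ σ) ↔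
    (∃ f : EuclideanSpace ℝ (Fin d) → Multiset (EuclideanSpace ℝ (Fin d)) →
        EuclideanSpace ℝ (Fin d),
      ∀ (x : Fin n → EuclideanSpace ℝ (Fin d)) (i : Fin n),
        V x i = f (x i) (Finset.univ.val.map x)) :=
  permutation_equivariant_iff_function_of_empirical_measure_general V
end

section
/- Let α be a type, n ≥ 1, and x, y : Fin n → α. The stabilizer subgroups of x and of y for the action of Perm(Fin n) on (Fin n → α) are conjugate in Perm(Fin n) if and only if there exists a permutation σ of Fin n such that for all i, j ∈ Fin n, x(i) = x(j) ⟺ y(σ(i)) = y(σ(j)). (Two configurations have conjugate isotropy groups exactly when their coincidence patterns match, i.e., the sizes of their packets of equal coordinates agree.) -/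
/-- The stabilizer, in `Equiv.Perm (Fin n)`, of a tuple `x : Fin n → α` under the
action `σ · x = x ∘ σ⁻¹`. -/
def tupleStabilizer {α : Type*} {n : ℕ} (x : Fin n → α) : Subgroup (Equiv.Perm (Fin n)) where
  carrier := {σ | x ∘ ⇑σ⁻¹ = x}
  one_mem' := by ext i; simp
  mul_mem' := by
    intro σ τ hσ hτ
    have hσ' : ∀ i, x (σ⁻¹ i) = x i := fun i => congrFun hσ i
    have hτ' : ∀ i, x (τ⁻¹ i) = x i := fun i => congrFun hτ i
    ext i
    simp only [Function.comp_apply, mul_inv_rev, Equiv.Perm.coe_mul]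
    rw [hτ', hσ']
  inv_mem' := by
    intro σ hσ
    have hσ' : ∀ i, x (σ⁻¹ i) = x i := fun i => congrFun hσ i
    ext i
    have := hσ' (σ i)
    simpa using this.symm

/-! The transposition of `i` and `j` fixes `x` exactly when `x i = x j`, and every permutation
fixing `x` moves points only within the fibers of `x`. Hence the stabilizer of `x` and the kernel
`Setoid.ker x` determine each other. Since the conjugate by `g` of the stabilizer of `x` is the
stabilizer of `g • x`, conjugacy of stabilizers becomes equality of kernels up to a permutation. -/

section ArrowAction

open Equiv MulAction

attribute [local instance] arrowAction

variable {ι α β : Type*}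

theorem mem_stabilizer_arrow_iff {x : ι → α} {σ : Perm ι} :
    σ ∈ stabilizer (Perm ι) x ↔ ∀ i, x (σ i) = x i := by
  rw [← inv_mem_iff, mem_stabilizer_iff, funext_iff]
  rfl

theorem swap_mem_stabilizer_arrow_iff [DecidableEq ι] {x : ι → α} {i j : ι} :
    swap i j ∈ stabilizer (Perm ι) x ↔ x i = x j := by
  rw [mem_stabilizer_arrow_iff]
  refine ⟨fun h => ?_, apply_swap_eq_self⟩
  simpa only [swap_apply_right] using h j

theorem stabilizer_arrow_le_stabilizer_arrow_iff {x : ι → α} {y : ι → β} :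
    stabilizer (Perm ι) x ≤ stabilizer (Perm ι) y ↔ Setoid.ker x ≤ Setoid.ker y := by
  classical
  constructor
  · intro hle i j hij
    exact swap_mem_stabilizer_arrow_iff.mp (hle (swap_mem_stabilizer_arrow_iff.mpr hij))
  · intro hker σ hσ
    exact mem_stabilizer_arrow_iff.mpr fun i => hker (mem_stabilizer_arrow_iff.mp hσ i)

theorem stabilizer_arrow_eq_stabilizer_arrow_iff {x : ι → α} {y : ι → β} :
    stabilizer (Perm ι) x = stabilizer (Perm ι) y ↔ Setoid.ker x = Setoid.ker y := by
  simp only [le_antisymm_iff, stabilizer_arrow_le_stabilizer_arrow_iff]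

theorem stabilizer_arrow_eq_map_conj_iff {x : ι → α} {y : ι → β} {g : Perm ι} :
    stabilizer (Perm ι) y = (stabilizer (Perm ι) x).map (MulAut.conj g).toMonoidHom ↔
      ∀ i j, x i = x j ↔ y (g i) = y (g j) := by
  have ker_smul_apply (i j : ι) : Setoid.ker (g • x) (g i) (g j) ↔ x i = x j := by
    change x (g⁻¹ • g • i) = x (g⁻¹ • g • j) ↔ x i = x j
    simp only [inv_smul_smul]
  calc
    _ ↔ Setoid.ker (g • x) = Setoid.ker y := by
      rw [← stabilizer_smul_eq_stabilizer_map_conj, eq_comm,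
        stabilizer_arrow_eq_stabilizer_arrow_iff]
    _ ↔ ∀ i j, Setoid.ker (g • x) (g i) (g j) ↔ Setoid.ker y (g i) (g j) := by
      rw [Setoid.ext_iff, g.surjective.forall₂]
    _ ↔ _ := by simp only [ker_smul_apply, Setoid.ker_def]

theorem stabilizers_conjugate_iff_coincidence_patterns_match_general (x : ι → α) (y : ι → β) :
    (∃ g : Perm ι,
        stabilizer (Perm ι) y = (stabilizer (Perm ι) x).map (MulAut.conj g).toMonoidHom) ↔
      ∃ σ : Perm ι, ∀ i j, x i = x j ↔ y (σ i) = y (σ j) :=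
  exists_congr fun _ => stabilizer_arrow_eq_map_conj_iff

theorem tupleStabilizer_eq_stabilizer_arrow {n : ℕ} (x : Fin n → α) :
    tupleStabilizer x = stabilizer (Perm (Fin n)) x :=
  rfl

end ArrowAction

/-- Two configurations have conjugate isotropy groups for the permutation action
exactly when their coincidence patterns match. -/
theorem stabilizers_conjugate_iff_coincidence_patterns_match
    {α : Type*} (n : ℕ) (hn : 1 ≤ n) (x y : Fin n → α) :
    (∃ g : Equiv.Perm (Fin n), ∀ σ : Equiv.Perm (Fin n),
        σ ∈ tupleStabilizer y ↔ g⁻¹ * σ * g ∈ tupleStabilizer x) ↔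
    (∃ σ : Equiv.Perm (Fin n), ∀ i j : Fin n, x i = x j ↔ y (σ i) = y (σ j)) := by
  simpa only [tupleStabilizer_eq_stabilizer_arrow, Subgroup.ext_iff, Subgroup.mem_map_equiv,
    MulAut.conj_symm_apply] using
    stabilizers_conjugate_iff_coincidence_patterns_match_general x y
end

section
/- Let n ≥ 1 and let S denote the real vector space of symmetric n × n real matrices. Let X : S → S be a Lipschitz vector field that is O(n)-equivariant: X(P A Pᵀ) = P X(A) Pᵀ for every orthogonal P and every A ∈ S. Let A : ℝ → S satisfy A'(t) = X(A(t)) for all t ∈ ℝ, and for B ∈ S let λ₁(B) ≤ λ₂(B) ≤ … ≤ λₙ(B) be the nondecreasing enumeration of the eigenvalues of B with multiplicity. Then the ordered multiplicities are preserved along the evolution: for all t ∈ ℝ and all indices i, j, λᵢ(A(t)) = λⱼ(A(t)) if and only if λᵢ(A(0)) = λⱼ(A(0)). -/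
open Matrix Polynomial

attribute [local instance] Matrix.normedAddCommGroup Matrix.normedSpace

/-- The real vector space (submodule) of symmetric `n × n` real matrices. -/
def symmetricMatrices (n : ℕ) : Submodule ℝ (Matrix (Fin n) (Fin n) ℝ) where
  carrier := {A | A.IsSymm}
  add_mem' := fun {A B} hA hB => by
    simp only [Set.mem_setOf_eq, Matrix.IsSymm] at *
    rw [Matrix.transpose_add, hA, hB]
  zero_mem' := by simp [Matrix.IsSymm]
  smul_mem' := fun c A hA => by
    simp only [Set.mem_setOf_eq, Matrix.IsSymm] at *
    rw [Matrix.transpose_smul, hA]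

/-!
If a linear map `L` commutes with a locally Lipschitz vector field, then `L` maps integral curves to
integral curves, so by uniqueness an integral curve with one point fixed by `L` is fixed pointwise:
isotropy is constant along the flow. By equivariance we may conjugate the curve so that one of its
points is diagonal. Being diagonal means being fixed by the coordinate reflections, hence the whole
curve is diagonal. For diagonal matrices, equality of two diagonal entries means being fixed by the
transposition of their indices, hence two diagonal entries agree either always or never. Continuous
functions with this property cannot cross, so the permutation sorting the diagonal at one time sorts
it at all times, and the ordered eigenvalues are the diagonal entries in this fixed order.
-/

theorem exists_lipschitzOnWith_mapsTo_mapsTo {α E F : Type*} [TopologicalSpace α]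
    [PseudoMetricSpace E] [PseudoMetricSpace F] {v : E → F} (hv : LocallyLipschitz v) {T : Set α}
    (hT : IsCompact T) {γ γ' : α → E} (hγ : ContinuousOn γ T) (hγ' : ContinuousOn γ' T) :
    ∃ K U, LipschitzOnWith K v U ∧ Set.MapsTo γ T U ∧ Set.MapsTo γ' T U := by
  have hcompact : IsCompact (γ '' T ∪ γ' '' T) :=
    (hT.image_of_continuousOn hγ).union (hT.image_of_continuousOn hγ')
  obtain ⟨K, hK⟩ := hv.locallyLipschitzOn.exists_lipschitzOnWith_of_compact hcompact
  exact ⟨K, _, hK, fun r hr ↦ .inl ⟨r, hr, rfl⟩, fun r hr ↦ .inr ⟨r, hr, rfl⟩⟩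

section IntegralCurve

open Set Function

variable {E F : Type*} [NormedAddCommGroup E] [NormedSpace ℝ E] [NormedAddCommGroup F]
  [NormedSpace ℝ F] {v : E → E} {γ γ' : ℝ → E} {I : Set ℝ} {s t : ℝ}

theorem eqOn_Icc_of_isIntegralCurveOn_of_eq_left (hv : LocallyLipschitz v)
    (hγ : IsIntegralCurveOn γ (fun _ ↦ v) (Icc s t))
    (hγ' : IsIntegralCurveOn γ' (fun _ ↦ v) (Icc s t)) (h : γ s = γ' s) :
    EqOn γ γ' (Icc s t) := by
  obtain ⟨K, U, hK, hU, hU'⟩ :=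
    exists_lipschitzOnWith_mapsTo_mapsTo hv isCompact_Icc hγ.continuousOn hγ'.continuousOn
  have hderiv {δ : ℝ → E} (hδ : IsIntegralCurveOn δ (fun _ ↦ v) (Icc s t)) (r : ℝ)
      (hr : r ∈ Ico s t) : HasDerivWithinAt δ (v (δ r)) (Ici r) r :=
    (hδ r (Ico_subset_Icc_self hr)).mono_of_mem_nhdsWithin (Icc_mem_nhdsGE_of_mem hr)
  exact ODE_solution_unique_of_mem_Icc_right (fun _ _ ↦ hK)
    hγ.continuousOn (hderiv hγ) (fun _ hr ↦ hU (Ico_subset_Icc_self hr))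
    hγ'.continuousOn (hderiv hγ') (fun _ hr ↦ hU' (Ico_subset_Icc_self hr)) h

theorem eqOn_Icc_of_isIntegralCurveOn_of_eq_right (hv : LocallyLipschitz v)
    (hγ : IsIntegralCurveOn γ (fun _ ↦ v) (Icc s t))
    (hγ' : IsIntegralCurveOn γ' (fun _ ↦ v) (Icc s t)) (h : γ t = γ' t) :
    EqOn γ γ' (Icc s t) := by
  obtain ⟨K, U, hK, hU, hU'⟩ :=
    exists_lipschitzOnWith_mapsTo_mapsTo hv isCompact_Icc hγ.continuousOn hγ'.continuousOn
  have hderiv {δ : ℝ → E} (hδ : IsIntegralCurveOn δ (fun _ ↦ v) (Icc s t)) (r : ℝ)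
      (hr : r ∈ Ioc s t) : HasDerivWithinAt δ (v (δ r)) (Iic r) r :=
    (hδ r (Ioc_subset_Icc_self hr)).mono_of_mem_nhdsWithin (Icc_mem_nhdsLE_of_mem hr)
  exact ODE_solution_unique_of_mem_Icc_left (fun _ _ ↦ hK)
    hγ.continuousOn (hderiv hγ) (fun _ hr ↦ hU (Ioc_subset_Icc_self hr))
    hγ'.continuousOn (hderiv hγ') (fun _ hr ↦ hU' (Ioc_subset_Icc_self hr)) h

theorem eqOn_of_isIntegralCurveOn (hv : LocallyLipschitz v) (hI : I.OrdConnected)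
    (hγ : IsIntegralCurveOn γ (fun _ ↦ v) I) (hγ' : IsIntegralCurveOn γ' (fun _ ↦ v) I)
    (hs : s ∈ I) (h : γ s = γ' s) : EqOn γ γ' I := by
  intro t ht
  obtain hst | hts := le_total s t
  · have hsub : Icc s t ⊆ I := hI.out hs ht
    exact eqOn_Icc_of_isIntegralCurveOn_of_eq_left hv (hγ.mono hsub) (hγ'.mono hsub) h
      (right_mem_Icc.2 hst)
  · have hsub : Icc t s ⊆ I := hI.out ht hs
    exact eqOn_Icc_of_isIntegralCurveOn_of_eq_right hv (hγ.mono hsub) (hγ'.mono hsub) h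
      (left_mem_Icc.2 hts)

theorem isIntegralCurveOn_comp_of_semiconj {w : F → F} (L : E →L[ℝ] F) (hL : Semiconj L v w)
    (hγ : IsIntegralCurveOn γ (fun _ ↦ v) I) :
    IsIntegralCurveOn (L ∘ γ) (fun _ ↦ w) I := by
  intro t ht
  have hw : w (L (γ t)) = L (v (γ t)) := (hL (γ t)).symm
  simpa only [Function.comp_apply, hw] using L.hasFDerivAt.comp_hasDerivWithinAt t (hγ t ht)

theorem isFixedPt_iff_of_isIntegralCurveOn (hv : LocallyLipschitz v) (hI : I.OrdConnected)
    (hγ : IsIntegralCurveOn γ (fun _ ↦ v) I) {L : E →L[ℝ] E} (hL : Function.Commute L v)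
    (hs : s ∈ I) (ht : t ∈ I) : IsFixedPt L (γ s) ↔ IsFixedPt L (γ t) := by
  have hLγ := isIntegralCurveOn_comp_of_semiconj L hL hγ
  exact ⟨fun h ↦ eqOn_of_isIntegralCurveOn hv hI hLγ hγ hs h ht,
    fun h ↦ eqOn_of_isIntegralCurveOn hv hI hLγ hγ ht h hs⟩

end IntegralCurve

section Order

variable {α β ι : Type*} [TopologicalSpace α] [LinearOrder β] [TopologicalSpace β]
  [OrderClosedTopology β] {S : Set α} {s t : α}

theorem le_of_forall_eq_imp_eq (hS : IsPreconnected S) {f g : α → β} (hf : ContinuousOn f S)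
    (hg : ContinuousOn g S) (h : ∀ r ∈ S, f r = g r → f t = g t) (hs : s ∈ S) (ht : t ∈ S)
    (hfg : f s ≤ g s) : f t ≤ g t := by
  by_contra! hlt
  obtain ⟨r, hr, hfgr⟩ := hS.intermediate_value₂ hs ht hf hg hfg hlt.le
  exact hlt.ne' (h r hr hfgr)

theorem monotone_of_forall_eq_imp_eq [Preorder ι] (hS : IsPreconnected S) {f : α → ι → β}
    (hf : ∀ i, ContinuousOn (f · i) S) (h : ∀ r ∈ S, ∀ i j, f r i = f r j → f t i = f t j)
    (hs : s ∈ S) (ht : t ∈ S) (hmono : Monotone (f s)) : Monotone (f t) := fun i j hij ↦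
  le_of_forall_eq_imp_eq hS (hf i) (hf j) (fun r hr ↦ h r hr i j) hs ht (hmono hij)

end Order

theorem eq_of_monotone_of_prod_X_sub_C_eq {R : Type*} [CommRing R] [IsDomain R] [PartialOrder R]
    {n : ℕ} {f g : Fin n → R} (hf : Monotone f) (hg : Monotone g)
    (h : ∏ i, (X - C (f i)) = ∏ i, (X - C (g i))) : f = g := by
  have roots_eq (u : Fin n → R) : (∏ i, (X - C (u i))).roots = (List.ofFn u : Multiset R) := by
    rw [← roots_multiset_prod_X_sub_C (List.ofFn u : Multiset R)]
    simp [List.prod_ofFn, List.map_ofFn]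
  have hperm : (List.ofFn f).Perm (List.ofFn g) := by
    rw [← Multiset.coe_eq_coe, ← roots_eq, ← roots_eq, h]
  exact List.ofFn_injective (hperm.eq_of_sortedLE hf.sortedLE_ofFn hg.sortedLE_ofFn)

section Conjugation

theorem isSymm_conj {k m R : Type*} [Fintype m] [CommSemiring R] (P : Matrix k m R)
    {A : Matrix m m R} (hA : A.IsSymm) : (P * A * Pᵀ).IsSymm := by
  rw [IsSymm, transpose_mul, transpose_mul, transpose_transpose, hA.eq, Matrix.mul_assoc]

variable {m R : Type*} [DecidableEq m]

/-- The matrix of the reflection that negates the `i`-th coordinate. -/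
def coordReflection (R : Type*) [Ring R] (i : m) : Matrix m m R :=
  diagonal (Pi.mulSingle i (-1))

variable [Fintype m]

theorem coordReflection_mul_transpose [Ring R] (i : m) :
    coordReflection R i * (coordReflection R i)ᵀ = 1 := by
  rw [coordReflection, diagonal_transpose, diagonal_mul_diagonal', ← Pi.mul_def, ← Pi.mulSingle_mul]
  simp

theorem isDiag_iff_forall_coordReflection_conj [Ring R] [IsAddTorsionFree R]
    {A : Matrix m m R} :
    A.IsDiag ↔ ∀ i, coordReflection R i * A * (coordReflection R i)ᵀ = A := by
  have conj_apply (i j k : m) : (coordReflection R i * A * (coordReflection R i)ᵀ) j k =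
      (Pi.mulSingle i (-1) : m → R) j * A j k * (Pi.mulSingle i (-1) : m → R) k := by
    rw [coordReflection, diagonal_transpose, mul_diagonal, diagonal_mul]
  refine ⟨fun h i ↦ ?_, fun h j k hjk ↦ ?_⟩
  · ext j k
    rw [conj_apply]
    obtain rfl | hjk := eq_or_ne j k
    · obtain rfl | hij := eq_or_ne i j <;> simp [*]
    · simp [h hjk]
  · have hneg : -A j k = A j k := by
      simpa [conj_apply, hjk.symm] using congrFun₂ (h j) j k
    exact neg_eq_self.1 hneg

theorem permMatrix_mul_transpose [NonAssocSemiring R] (σ : Equiv.Perm m) :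
    σ.permMatrix R * (σ.permMatrix R)ᵀ = 1 := by
  rw [transpose_permMatrix, ← permMatrix_mul, inv_mul_cancel, permMatrix_one]

theorem permMatrix_conj [NonAssocSemiring R] (σ : Equiv.Perm m) (A : Matrix m m R) :
    σ.permMatrix R * A * (σ.permMatrix R)ᵀ = A.submatrix σ σ := by
  rw [transpose_permMatrix, Equiv.Perm.permMatrix, Equiv.Perm.permMatrix,
    PEquiv.toMatrix_toPEquiv_mul, PEquiv.mul_toMatrix_toPEquiv]
  rfl

theorem diag_eq_diag_iff_swap_conj [NonAssocSemiring R] {A : Matrix m m R} (hA : A.IsDiag)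
    (i j : m) : A.diag i = A.diag j ↔
      (Equiv.swap i j).permMatrix R * A * ((Equiv.swap i j).permMatrix R)ᵀ = A := by
  obtain ⟨d, rfl⟩ : ∃ d, A = diagonal d := ⟨A.diag, hA.diagonal_diag.symm⟩
  rw [permMatrix_conj, submatrix_diagonal_equiv, diag_diagonal, diagonal_injective.eq_iff]
  refine ⟨fun h ↦ funext fun k ↦ Equiv.apply_swap_eq_self h k, fun h ↦ ?_⟩
  simpa using congrFun h j

theorem charpoly_conj_of_mul_eq_one [CommRing R] {P Q : Matrix m m R} (hPQ : P * Q = 1)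
    (A : Matrix m m R) : (P * A * Q).charpoly = A.charpoly := by
  rw [charpoly_mul_comm, ← Matrix.mul_assoc, mul_eq_one_comm.1 hPQ, Matrix.one_mul]

theorem exists_orthogonal_conj_isDiag {A : Matrix m m ℝ} (hA : A.IsSymm) :
    ∃ P : Matrix m m ℝ, P * Pᵀ = 1 ∧ (P * A * Pᵀ).IsDiag := by
  have hA' : A.IsHermitian := hA
  have hspec := hA'.conjStarAlgAut_star_eigenvectorUnitary
  rw [Unitary.conjStarAlgAut_apply] at hspec
  refine ⟨(star hA'.eigenvectorUnitary).1, Unitary.coe_mul_star_self _, ?_⟩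
  exact hspec ▸ isDiag_diagonal _

theorem eq_diag_comp_of_charpoly_eq_prod [CommRing R] [IsDomain R] [PartialOrder R] {n : ℕ}
    {A : Matrix (Fin n) (Fin n) R} (hA : A.IsDiag) {σ : Equiv.Perm (Fin n)}
    (hσ : Monotone (A.diag ∘ σ)) {l : Fin n → R} (hl : Monotone l)
    (hroots : A.charpoly = ∏ i, (X - C (l i))) : l = A.diag ∘ σ := by
  refine eq_of_monotone_of_prod_X_sub_C_eq hl hσ ?_
  rw [← hroots, ← hA.diagonal_diag, charpoly_diagonal, diag_diagonal]
  exact (Equiv.prod_comp σ fun i ↦ X - C (A.diag i)).symm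

end Conjugation

/-- The map `A ↦ P A Pᵀ` on symmetric matrices. It is defined for every square `P` so that no proof
of orthogonality has to be carried around. -/
noncomputable def symmetricConj {n : ℕ} (P : Matrix (Fin n) (Fin n) ℝ) :
    symmetricMatrices n →L[ℝ] symmetricMatrices n :=
  LinearMap.toContinuousLinearMap
    { toFun := fun A ↦ ⟨P * A * Pᵀ, isSymm_conj P A.2⟩
      map_add' := fun A B ↦ Subtype.ext <| by simp [Matrix.mul_add, Matrix.add_mul]
      map_smul' := fun c A ↦ Subtype.ext <| by simp }

/-- Equivariance of a vector field on symmetric matrices under conjugation by the orthogonal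
group, with `P` orthogonal spelled as `P * Pᵀ = 1`. -/
def IsOrthogonallyEquivariant {n : ℕ} (X : symmetricMatrices n → symmetricMatrices n) : Prop :=
  ∀ P : Matrix (Fin n) (Fin n) ℝ, P * Pᵀ = 1 → Function.Commute (symmetricConj P) X

section EquivariantFlow

variable {n : ℕ} {X : symmetricMatrices n → symmetricMatrices n} {A : ℝ → symmetricMatrices n}
  {I : Set ℝ} {s t : ℝ}

theorem conj_eq_iff_of_isIntegralCurveOn (hX : LocallyLipschitz X)
    (hXeq : IsOrthogonallyEquivariant X) (hI : I.OrdConnected)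
    (hA : IsIntegralCurveOn A (fun _ ↦ X) I) (hs : s ∈ I) (ht : t ∈ I)
    {P : Matrix (Fin n) (Fin n) ℝ} (hP : P * Pᵀ = 1) :
    P * (A s).1 * Pᵀ = (A s).1 ↔ P * (A t).1 * Pᵀ = (A t).1 := by
  have hfixed := isFixedPt_iff_of_isIntegralCurveOn hX hI hA (hXeq P hP) hs ht
  exact Subtype.ext_iff.symm.trans (hfixed.trans Subtype.ext_iff)

theorem isDiag_iff_of_isIntegralCurveOn (hX : LocallyLipschitz X)
    (hXeq : IsOrthogonallyEquivariant X) (hI : I.OrdConnected)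
    (hA : IsIntegralCurveOn A (fun _ ↦ X) I) (hs : s ∈ I) (ht : t ∈ I) :
    (A s).1.IsDiag ↔ (A t).1.IsDiag := by
  simp only [isDiag_iff_forall_coordReflection_conj]
  exact forall_congr' fun i ↦ conj_eq_iff_of_isIntegralCurveOn hX hXeq hI hA hs ht
    (coordReflection_mul_transpose i)

theorem diag_eq_diag_iff_of_isIntegralCurveOn (hX : LocallyLipschitz X)
    (hXeq : IsOrthogonallyEquivariant X) (hI : I.OrdConnected)
    (hA : IsIntegralCurveOn A (fun _ ↦ X) I) (hs : s ∈ I) (ht : t ∈ I) (hdiag : (A s).1.IsDiag)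
    (i j : Fin n) : (A s).1.diag i = (A s).1.diag j ↔ (A t).1.diag i = (A t).1.diag j := by
  have hdiag' := (isDiag_iff_of_isIntegralCurveOn hX hXeq hI hA hs ht).1 hdiag
  rw [diag_eq_diag_iff_swap_conj hdiag, diag_eq_diag_iff_swap_conj hdiag']
  exact conj_eq_iff_of_isIntegralCurveOn hX hXeq hI hA hs ht (permMatrix_mul_transpose _)

theorem monotone_diag_comp_of_isIntegralCurveOn (hX : LocallyLipschitz X)
    (hXeq : IsOrthogonallyEquivariant X) (hI : I.OrdConnected)
    (hA : IsIntegralCurveOn A (fun _ ↦ X) I) (hs : s ∈ I) (ht : t ∈ I) (hdiag : (A s).1.IsDiag)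
    {ι : Type*} [Preorder ι] {σ : ι → Fin n} (hσ : Monotone ((A s).1.diag ∘ σ)) :
    Monotone ((A t).1.diag ∘ σ) := by
  have hcont (i : Fin n) : ContinuousOn (fun r ↦ (A r).1.diag i) I :=
    (continuous_subtype_val.matrix_elem i i).comp_continuousOn hA.continuousOn
  refine monotone_of_forall_eq_imp_eq (f := fun r ↦ (A r).1.diag ∘ σ) hI.isPreconnected
    (fun i ↦ hcont (σ i)) (fun r hr i j ↦ ?_) hs ht hσ
  have hdiag' := (isDiag_iff_of_isIntegralCurveOn hX hXeq hI hA hs hr).1 hdiag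
  exact (diag_eq_diag_iff_of_isIntegralCurveOn hX hXeq hI hA hr ht hdiag' (σ i) (σ j)).1

theorem ordered_multiplicities_preserved_along_equivariant_flow_general
    (hX : LocallyLipschitz X) (hXeq : IsOrthogonallyEquivariant X) (hI : I.OrdConnected)
    (hA : IsIntegralCurveOn A (fun _ ↦ X) I) {lam : ℝ → Fin n → ℝ}
    (hmono : ∀ t ∈ I, Monotone (lam t))
    (hroots : ∀ t ∈ I, (A t).1.charpoly = ∏ i, (Polynomial.X - C (lam t i)))
    (hs : s ∈ I) (ht : t ∈ I) (i j : Fin n) : lam s i = lam s j ↔ lam t i = lam t j := by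
  obtain ⟨P, hP, hdiag⟩ := exists_orthogonal_conj_isDiag (A s).2
  let B : ℝ → symmetricMatrices n := symmetricConj P ∘ A
  have hB : IsIntegralCurveOn B (fun _ ↦ X) I :=
    isIntegralCurveOn_comp_of_semiconj _ (hXeq P hP) hA
  let σ := Tuple.sort (B s).1.diag
  have hlam (r : ℝ) (hr : r ∈ I) : lam r = (B r).1.diag ∘ σ :=
    eq_diag_comp_of_charpoly_eq_prod
      ((isDiag_iff_of_isIntegralCurveOn hX hXeq hI hB hs hr).1 hdiag)
      (monotone_diag_comp_of_isIntegralCurveOn hX hXeq hI hB hs hr hdiag (Tuple.monotone_sort _))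
      (hmono r hr) ((charpoly_conj_of_mul_eq_one hP _).trans (hroots r hr))
  rw [hlam s hs, hlam t ht]
  exact diag_eq_diag_iff_of_isIntegralCurveOn hX hXeq hI hB hs ht hdiag (σ i) (σ j)

end EquivariantFlow

/-- Along the flow of a Lipschitz, `O(n)`-equivariant vector field on the space of
symmetric matrices, the ordered multiplicities of the eigenvalues (listed in
nondecreasing order with multiplicity) are preserved. -/
theorem ordered_multiplicities_preserved_along_equivariant_flow
    (n : ℕ) (hn : 1 ≤ n)
    (X : symmetricMatrices n → symmetricMatrices n)
    (K : NNReal) (hX : LipschitzWith K X)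
    (hXeq : ∀ P : Matrix (Fin n) (Fin n) ℝ, P * Pᵀ = 1 →
      ∀ A B : symmetricMatrices n, (B : Matrix (Fin n) (Fin n) ℝ) = P * (A : Matrix (Fin n) (Fin n) ℝ) * Pᵀ →
        (X B : Matrix (Fin n) (Fin n) ℝ) = P * (X A : Matrix (Fin n) (Fin n) ℝ) * Pᵀ)
    (A : ℝ → symmetricMatrices n)
    (hA : ∀ t : ℝ, HasDerivAt A (X (A t)) t)
    (lam : ℝ → Fin n → ℝ)
    (hmono : ∀ t : ℝ, Monotone (lam t))
    (hroots : ∀ t : ℝ, (A t : Matrix (Fin n) (Fin n) ℝ).charpoly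
        = ∏ i : Fin n, (Polynomial.X - Polynomial.C (lam t i))) :
    ∀ (t : ℝ) (i j : Fin n), lam t i = lam t j ↔ lam 0 i = lam 0 j := by
  have hequiv : IsOrthogonallyEquivariant X := fun P hP B ↦ Subtype.ext (hXeq P hP B _ rfl).symm
  exact fun t i j ↦ ordered_multiplicities_preserved_along_equivariant_flow_general
    hX.locallyLipschitz hequiv Set.ordConnected_univ (isIntegralCurveOn_univ.2 hA)
    (fun t _ ↦ hmono t) (fun t _ ↦ hroots t) (Set.mem_univ t) (Set.mem_univ 0) i j
end

section
/- Let E be a finite-dimensional real normed vector space, let τ : E → E be a continuous linear involution (τ ∘ τ = id), and let X : E → E be a Lipschitz vector field with X ∘ τ = τ ∘ X. Let x : ℝ → E satisfy x'(t) = X(x(t)) for all t ∈ ℝ. Then either x(t) lies in the fixed subspace Fix(τ) = {v ∈ E : τ v = v} for every t ∈ ℝ, or x(t) ∉ Fix(τ) for every t ∈ ℝ. (The fixed-point set of a linear symmetry is invariant in both time directions under the flow of an equivariant vector field; this is the mechanism by which, on the double of a manifold with boundary, equivariant flows preserve the boundary and the interior.) -/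
section IntegralCurve

variable {E F : Type*} [NormedAddCommGroup E] [NormedSpace ℝ E]
  [NormedAddCommGroup F] [NormedSpace ℝ F]

theorem isIntegralCurve_clm_comp_of_semiconj {L : E →L[ℝ] F} {v : ℝ → E → E} {w : ℝ → F → F}
    {γ : ℝ → E} (hL : ∀ t, Function.Semiconj L (v t) (w t)) (hγ : IsIntegralCurve γ v) :
    IsIntegralCurve (L ∘ γ) w := fun t ↦ by
  have hderiv : HasDerivAt (L ∘ γ) (L (v t (γ t))) t := L.hasFDerivAt.comp_hasDerivAt t (hγ t)
  rwa [hL t (γ t)] at hderiv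

theorem isIntegralCurve_eq_of_lipschitzWith {v : ℝ → E → E} {K : NNReal} {γ γ' : ℝ → E} {t₀ : ℝ}
    (hv : ∀ t, LipschitzWith K (v t)) (hγ : IsIntegralCurve γ v) (hγ' : IsIntegralCurve γ' v)
    (h : γ t₀ = γ' t₀) : γ = γ' :=
  ODE_solution_unique_univ (fun t ↦ (hv t).lipschitzOnWith (s := Set.univ))
    (fun t ↦ ⟨hγ t, Set.mem_univ _⟩) (fun t ↦ ⟨hγ' t, Set.mem_univ _⟩) h

theorem isIntegralCurve_eq_or_forall_ne_of_lipschitzWith {v : ℝ → E → E} {K : NNReal}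
    {γ γ' : ℝ → E} (hv : ∀ t, LipschitzWith K (v t)) (hγ : IsIntegralCurve γ v)
    (hγ' : IsIntegralCurve γ' v) : γ = γ' ∨ ∀ t, γ t ≠ γ' t := by
  refine or_iff_not_imp_right.mpr fun hmeet ↦ ?_
  obtain ⟨t₀, ht₀⟩ : ∃ t₀, γ t₀ = γ' t₀ := by simpa only [not_forall, not_not] using hmeet
  exact isIntegralCurve_eq_of_lipschitzWith hv hγ hγ' ht₀

theorem fixed_subspace_invariant_under_equivariant_flow_general {τ : E →L[ℝ] E}
    {X : ℝ → E → E} {K : NNReal} {x : ℝ → E} (hX : ∀ t, LipschitzWith K (X t))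
    (hcomm : ∀ t, Function.Commute (X t) τ) (hx : IsIntegralCurve x X) :
    (∀ t, τ (x t) = x t) ∨ ∀ t, τ (x t) ≠ x t := by
  have hτx : IsIntegralCurve (τ ∘ x) X :=
    isIntegralCurve_clm_comp_of_semiconj (fun t ↦ (hcomm t).symm) hx
  exact (isIntegralCurve_eq_or_forall_ne_of_lipschitzWith hX hτx hx).imp_left congrFun

end IntegralCurve

/-- The fixed-point set of a continuous linear involution is invariant in both time
directions under the flow of an equivariant Lipschitz vector field: a solution either
stays in the fixed subspace for all time, or avoids it for all time. -/
theorem fixed_subspace_invariant_under_equivariant_flow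
    {E : Type*} [NormedAddCommGroup E] [NormedSpace ℝ E] [FiniteDimensional ℝ E]
    (τ : E →L[ℝ] E) (hτ : ∀ v : E, τ (τ v) = v)
    (X : E → E) (K : NNReal) (hX : LipschitzWith K X)
    (hcomm : ∀ v : E, X (τ v) = τ (X v))
    (x : ℝ → E) (hx : ∀ t : ℝ, HasDerivAt x (X (x t)) t) :
    (∀ t : ℝ, τ (x t) = x t) ∨ (∀ t : ℝ, τ (x t) ≠ x t) :=
  fixed_subspace_invariant_under_equivariant_flow_general (fun _ ↦ hX) (fun _ ↦ hcomm) hx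
end
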